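/- arXiv:1508.07243 — 2 statements merged into one kernel-verified Lean document; each statement's English description precedes it below -/
import Mathlib

section
/- For every γ ∈ (0,∞), the Huber regularisation φ_γ : ℝ^m → ℝ is everywhere differentiable, and its gradient at every point g ∈ ℝ^m equals h_γ(g). -/
/-- The Huber regularisation of the Euclidean norm. -/
noncomputable def huber (γ : ℝ) {m : ℕ} (g : EuclideanSpace ℝ (Fin m)) : ℝ :=
  if 1 / γ ≤ ‖g‖ then ‖g‖ - 1 / (2 * γ) else γ / 2 * ‖g‖ ^ 2

/-- The map `h_γ`, the gradient of the Huber regularisation: `h_γ(g) = γ g` if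
`‖g‖ ≤ 1/γ` and `h_γ(g) = g/‖g‖` if `‖g‖ ≥ 1/γ`. -/
noncomputable def huberGrad (γ : ℝ) {m : ℕ} (g : EuclideanSpace ℝ (Fin m)) :
    EuclideanSpace ℝ (Fin m) :=
  if ‖g‖ ≤ 1 / γ then γ • g else ‖g‖⁻¹ • g

/-!
The quadratic and the linear formula for the Huber function have the same value and the same
gradient on the sphere `‖y‖ = 1 / γ`, so they are valid on the closed sets `‖y‖ ≤ 1 / γ` and
`1 / γ ≤ ‖y‖`. Derivatives within the members of a closed cover glue, since a closed set that misses
the point imposes no condition there.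
-/

section Gluing

variable {𝕜 E F : Type*} [NontriviallyNormedField 𝕜]
  [AddCommGroup E] [Module 𝕜 E] [TopologicalSpace E] [AddCommGroup F] [Module 𝕜 F]
  [TopologicalSpace F] {f : E → F} {f' : E →L[𝕜] F} {s t : Set E} {x : E}

theorem hasFDerivWithinAt_of_isClosed (hs : IsClosed s)
    (h : x ∈ s → HasFDerivWithinAt f f' s x) : HasFDerivWithinAt f f' s x := by
  by_cases hx : x ∈ s
  · exact h hx
  · exact .of_notMem_closure (hs.closure_eq.symm ▸ hx)

theorem hasFDerivAt_of_isClosed_union_eq_univ (hs : IsClosed s) (ht : IsClosed t)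
    (hst : s ∪ t = Set.univ) (h₁ : x ∈ s → HasFDerivWithinAt f f' s x)
    (h₂ : x ∈ t → HasFDerivWithinAt f f' t x) : HasFDerivAt f f' x := by
  rw [← hasFDerivWithinAt_univ, ← hst]
  exact (hasFDerivWithinAt_of_isClosed hs h₁).union (hasFDerivWithinAt_of_isClosed ht h₂)

end Gluing

section Hilbert

variable {E : Type*} [NormedAddCommGroup E] [InnerProductSpace ℝ E] [CompleteSpace E]

theorem hasGradientAt_half_mul_norm_sq (c : ℝ) (x : E) :
    HasGradientAt (fun y ↦ c / 2 * ‖y‖ ^ 2) (c • x) x := by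
  refine ((hasStrictFDerivAt_norm_sq x).hasFDerivAt.const_mul (c / 2)).congr_fderiv ?_
  ext v
  simp only [smul_apply, innerSL_apply_apply, nsmul_eq_mul, Nat.cast_ofNat,
    smul_eq_mul, map_smul, InnerProductSpace.toDual_apply_apply]
  ring

theorem hasGradientAt_norm {x : E} (hx : x ≠ 0) : HasGradientAt (fun y ↦ ‖y‖) (‖x‖⁻¹ • x) x := by
  have hsqrt := (hasStrictFDerivAt_norm_sq x).hasFDerivAt.sqrt (by positivity)
  simp only [Real.sqrt_sq (norm_nonneg _)] at hsqrt
  refine hsqrt.congr_fderiv ?_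
  ext v
  simp only [smul_apply, innerSL_apply_apply, nsmul_eq_mul, Nat.cast_ofNat,
    smul_eq_mul, map_smul, InnerProductSpace.toDual_apply_apply]
  field_simp

theorem huber_hasGradient_general {γ : ℝ} (hγ : 0 < γ) (x : E) :
    HasGradientAt (fun y : E ↦ if 1 / γ ≤ ‖y‖ then ‖y‖ - 1 / (2 * γ) else γ / 2 * ‖y‖ ^ 2)
      (if ‖x‖ ≤ 1 / γ then γ • x else ‖x‖⁻¹ • x) x := by
  have value_eq_quadratic (y : E) (hy : ‖y‖ ≤ 1 / γ) :
      (if 1 / γ ≤ ‖y‖ then ‖y‖ - 1 / (2 * γ) else γ / 2 * ‖y‖ ^ 2) = γ / 2 * ‖y‖ ^ 2 := by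
    refine ite_eq_right_iff.2 fun hy' ↦ ?_
    rw [le_antisymm hy hy']
    field_simp
    ring
  have gradient_eq_normalized (hx : 1 / γ ≤ ‖x‖) :
      (if ‖x‖ ≤ 1 / γ then γ • x else ‖x‖⁻¹ • x) = ‖x‖⁻¹ • x :=
    ite_eq_right_iff.2 fun hx' ↦ by rw [le_antisymm hx' hx, one_div, inv_inv]
  refine hasFDerivAt_of_isClosed_union_eq_univ (s := {y | ‖y‖ ≤ 1 / γ}) (t := {y | 1 / γ ≤ ‖y‖})
    (isClosed_le continuous_norm continuous_const) (isClosed_le continuous_const continuous_norm)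
    (Set.eq_univ_of_forall fun y ↦ le_total ‖y‖ (1 / γ)) (fun hx ↦ ?_) (fun hx ↦ ?_)
  · rw [if_pos (show ‖x‖ ≤ 1 / γ from hx)]
    have hquad := (hasGradientAt_half_mul_norm_sq γ x).hasFDerivAt
    exact hquad.hasFDerivWithinAt.congr value_eq_quadratic (value_eq_quadratic x hx)
  · have hx₀ : x ≠ 0 := norm_pos_iff.1 ((one_div_pos.2 hγ).trans_le hx)
    rw [gradient_eq_normalized hx]
    have hlin := (hasGradientAt_norm hx₀).hasFDerivAt.sub_const (1 / (2 * γ))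
    exact hlin.hasFDerivWithinAt.congr (fun _ hy ↦ if_pos hy) (if_pos hx)

end Hilbert

/-- The Huber regularisation is everywhere differentiable with gradient `h_γ`. -/
theorem huber_hasGradient (γ : ℝ) (hγ : 0 < γ) (m : ℕ)
    (g : EuclideanSpace ℝ (Fin m)) :
    HasGradientAt (huber γ) (huberGrad γ g) g :=
  huber_hasGradient_general hγ g
end

section
/- Let γ ∈ (0,∞) and let g ∈ ℝ^m satisfy ‖g‖ ≠ 1/γ. Then the map h_γ : ℝ^m → ℝ^m is Fréchet differentiable at g, and its derivative D = h′_γ(g) is positive semidefinite: ⟨D v, v⟩ ≥ 0 for every v ∈ ℝ^m. Explicitly, D = γ·Id if ‖g‖ < 1/γ, and D v = (v − ⟨g/‖g‖, v⟩ g/‖g‖)/‖g‖ if ‖g‖ > 1/γ. -/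
open scoped RealInnerProductSpace

/-!
The derivative of `x ↦ ‖x‖` at `x ≠ 0` is the inner product with the unit vector `x/‖x‖`, so the
product rule shows that the derivative of `x ↦ x/‖x‖` is `‖x‖⁻¹` times the orthogonal projection
onto the hyperplane `xᗮ`. Off the sphere `‖g‖ = 1/γ`, the map `h_γ` locally agrees with `γ • g` or
with `g/‖g‖`; its derivative is thus a nonnegative multiple of the identity or of an orthogonal
projection, and both are positive.
-/

section InnerProductSpace

variable {E : Type*} [NormedAddCommGroup E] [InnerProductSpace ℝ E] {x : E}

theorem hasStrictFDerivAt_norm (hx : x ≠ 0) :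
    HasStrictFDerivAt (fun y : E ↦ ‖y‖) (innerSL ℝ (NormedSpace.normalize x)) x := by
  have h_sqrt := (hasStrictFDerivAt_norm_sq x).sqrt (pow_ne_zero 2 (norm_ne_zero_iff.mpr hx))
  simp only [Real.sqrt_sq (norm_nonneg _)] at h_sqrt
  refine h_sqrt.congr_fderiv ?_
  rw [NormedSpace.normalize, map_smul]
  module

theorem starProjection_span_singleton_eq_inner_normalize_smul (x v : E) :
    (ℝ ∙ x).starProjection v = ⟪NormedSpace.normalize x, v⟫ • NormedSpace.normalize x := by
  rw [Submodule.starProjection_singleton, NormedSpace.normalize, real_inner_smul_left,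
    RCLike.ofReal_real_eq_id, id_eq]
  module

theorem starProjection_orthogonal_span_singleton_eq_sub (x v : E) :
    (ℝ ∙ x)ᗮ.starProjection v = v - ⟪NormedSpace.normalize x, v⟫ • NormedSpace.normalize x := by
  rw [Submodule.starProjection_orthogonal_val,
    starProjection_span_singleton_eq_inner_normalize_smul]

theorem hasStrictFDerivAt_normalize (hx : x ≠ 0) :
    HasStrictFDerivAt NormedSpace.normalize (‖x‖⁻¹ • (ℝ ∙ x)ᗮ.starProjection) x := by
  have h_inv : HasStrictFDerivAt (fun y : E ↦ ‖y‖⁻¹)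
      (-(‖x‖ ^ 2)⁻¹ • innerSL ℝ (NormedSpace.normalize x)) x :=
    (hasStrictDerivAt_inv (norm_ne_zero_iff.mpr hx)).comp_hasStrictFDerivAt x
      (hasStrictFDerivAt_norm hx)
  refine (h_inv.smul (hasStrictFDerivAt_id x)).congr_fderiv ?_
  ext v
  change ‖x‖⁻¹ • v + (-(‖x‖ ^ 2)⁻¹ * ⟪NormedSpace.normalize x, v⟫) • x =
    ‖x‖⁻¹ • (ℝ ∙ x)ᗮ.starProjection v
  rw [starProjection_orthogonal_span_singleton_eq_sub, NormedSpace.normalize]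
  module

end InnerProductSpace

section HuberGrad

open scoped Topology

variable {γ : ℝ} {m : ℕ} {g : EuclideanSpace ℝ (Fin m)}

theorem huberGrad_eventuallyEq_smul (h : ‖g‖ < 1 / γ) : huberGrad γ =ᶠ[𝓝 g] (γ • ·) := by
  filter_upwards [continuous_norm.continuousAt.eventually_lt_const h] with x hx
  exact if_pos hx.le

theorem huberGrad_eventuallyEq_normalize (h : 1 / γ < ‖g‖) :
    huberGrad γ =ᶠ[𝓝 g] NormedSpace.normalize := by
  filter_upwards [continuous_norm.continuousAt.eventually_const_lt h] with x hx
  exact if_neg hx.not_ge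

theorem hasFDerivAt_huberGrad_of_norm_lt (h : ‖g‖ < 1 / γ) :
    HasFDerivAt (huberGrad γ) (γ • ContinuousLinearMap.id ℝ _) g :=
  ((hasFDerivAt_id g).const_smul γ).congr_of_eventuallyEq (huberGrad_eventuallyEq_smul h)

theorem hasFDerivAt_huberGrad_of_lt_norm (hg : g ≠ 0) (h : 1 / γ < ‖g‖) :
    HasFDerivAt (huberGrad γ) (‖g‖⁻¹ • (ℝ ∙ g)ᗮ.starProjection) g :=
  (hasStrictFDerivAt_normalize hg).hasFDerivAt.congr_of_eventuallyEq
    (huberGrad_eventuallyEq_normalize h)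

end HuberGrad

/-- At every point `g` with `‖g‖ ≠ 1/γ`, the map `h_γ` is Fréchet differentiable,
its derivative `D` is positive semidefinite, and `D` is given explicitly by
`D = γ·Id` if `‖g‖ < 1/γ` and `D v = (v − ⟨g/‖g‖, v⟩ g/‖g‖)/‖g‖` if `‖g‖ > 1/γ`. -/
theorem huberGrad_hasFDerivAt (γ : ℝ) (hγ : 0 < γ) (m : ℕ)
    (g : EuclideanSpace ℝ (Fin m)) (hg : ‖g‖ ≠ 1 / γ) :
    ∃ D : EuclideanSpace ℝ (Fin m) →L[ℝ] EuclideanSpace ℝ (Fin m),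
      HasFDerivAt (huberGrad γ) D g ∧
      (∀ v : EuclideanSpace ℝ (Fin m), 0 ≤ ⟪D v, v⟫) ∧
      (‖g‖ < 1 / γ → ∀ v : EuclideanSpace ℝ (Fin m), D v = γ • v) ∧
      (1 / γ < ‖g‖ → ∀ v : EuclideanSpace ℝ (Fin m),
        D v = ‖g‖⁻¹ • (v - ⟪‖g‖⁻¹ • g, v⟫ • (‖g‖⁻¹ • g))) := by
  rcases hg.lt_or_gt with h | h
  · have hD : (γ • ContinuousLinearMap.id ℝ (EuclideanSpace ℝ (Fin m))).IsPositive :=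
      .smul_of_nonneg ContinuousLinearMap.isPositive_id hγ.le
    exact ⟨_, hasFDerivAt_huberGrad_of_norm_lt h, hD.inner_nonneg_left, fun _ _ ↦ rfl,
      fun h' ↦ absurd h' h.not_gt⟩
  · have hg₀ : g ≠ 0 := norm_pos_iff.mp ((one_div_pos.mpr hγ).trans h)
    have hD : (‖g‖⁻¹ • (ℝ ∙ g)ᗮ.starProjection).IsPositive :=
      .smul_of_nonneg (.of_isStarProjection isStarProjection_starProjection) (by positivity)
    exact ⟨_, hasFDerivAt_huberGrad_of_lt_norm hg₀ h, hD.inner_nonneg_left,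
      fun h' ↦ absurd h' h.not_gt,
      fun _ v ↦ congrArg (‖g‖⁻¹ • ·) (starProjection_orthogonal_span_singleton_eq_sub g v)⟩
end
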